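/- Let r ∈ (1,2] and ψ_r : ℝ → ℝ be defined by ψ_r(x) = |x|^r. Then for all real x and y, |ψ_r'(x) - ψ_r'(y)| ≤ r * 2^(2-r) * |x - y|^(r-1), where ψ_r'(x) = r * |x|^(r-1) * sign(x). -/

import Mathlib

/-!
For vectors `x`, `y` at angle `θ`, the weights `(1 ± cos θ) / 2` express `‖x - y‖ ^ 2` as a convex
combination of `(‖x‖ - ‖y‖) ^ 2` and `(‖x‖ + ‖y‖) ^ 2`. Replacing `x` by `‖x‖ ^ (p - 1) • x`
changes norms to their `p`-th powers and keeps the angle, hence the weights. As `t ↦ t ^ p` is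
concave for `p ≤ 1`, the Hölder estimate need only be checked at the two extreme angles, where it
reads `|a ^ p - b ^ p| ≤ 2 ^ (1 - p) * |a - b| ^ p` and `a ^ p + b ^ p ≤ 2 ^ (1 - p) * (a + b) ^ p`.
-/

open InnerProductGeometry

section Rpow

variable {p a b : ℝ}

theorem rpow_add_rpow_le_two_rpow_mul_add_rpow (hp₀ : 0 ≤ p) (hp₁ : p ≤ 1) (ha : 0 ≤ a)
    (hb : 0 ≤ b) : a ^ p + b ^ p ≤ 2 ^ (1 - p) * (a + b) ^ p := by
  have midpoint : 2⁻¹ * a ^ p + 2⁻¹ * b ^ p ≤ (2⁻¹ * a + 2⁻¹ * b) ^ p :=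
    (Real.concaveOn_rpow hp₀ hp₁).2 ha hb (by norm_num) (by norm_num) (by norm_num)
  calc a ^ p + b ^ p = 2 * (2⁻¹ * a ^ p + 2⁻¹ * b ^ p) := by ring
    _ ≤ 2 * (2⁻¹ * a + 2⁻¹ * b) ^ p := by gcongr
    _ = 2 ^ (1 - p) * (a + b) ^ p := by
      rw [← mul_add, Real.mul_rpow (by norm_num) (add_nonneg ha hb),
        Real.inv_rpow zero_le_two, Real.rpow_sub two_pos, Real.rpow_one]
      ring

theorem abs_rpow_sub_rpow_le_abs_sub_rpow (hp₀ : 0 ≤ p) (hp₁ : p ≤ 1) (ha : 0 ≤ a)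
    (hb : 0 ≤ b) : |a ^ p - b ^ p| ≤ |a - b| ^ p := by
  wlog hba : b ≤ a generalizing a b
  · simpa only [abs_sub_comm] using this hb ha (le_of_not_ge hba)
  have subadditive : (a - b + b) ^ p ≤ (a - b) ^ p + b ^ p :=
    Real.rpow_add_le_add_rpow (sub_nonneg.2 hba) hb hp₀ hp₁
  rw [abs_of_nonneg (sub_nonneg.2 (Real.rpow_le_rpow hb hba hp₀)),
    abs_of_nonneg (sub_nonneg.2 hba), sub_le_iff_le_add]
  rwa [sub_add_cancel] at subadditive

theorem sq_rpow_add_rpow_le (hp₀ : 0 ≤ p) (hp₁ : p ≤ 1) (ha : 0 ≤ a) (hb : 0 ≤ b) :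
    (a ^ p + b ^ p) ^ 2 ≤ (2 ^ (1 - p)) ^ 2 * ((a + b) ^ 2) ^ p := by
  rw [← Real.rpow_pow_comm (add_nonneg ha hb), ← mul_pow]
  gcongr
  exact rpow_add_rpow_le_two_rpow_mul_add_rpow hp₀ hp₁ ha hb

theorem sq_rpow_sub_rpow_le (hp₀ : 0 ≤ p) (hp₁ : p ≤ 1) (ha : 0 ≤ a) (hb : 0 ≤ b) :
    (a ^ p - b ^ p) ^ 2 ≤ ((a - b) ^ 2) ^ p := by
  rw [← sq_abs, ← sq_abs (a - b), ← Real.rpow_pow_comm (abs_nonneg _)]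
  gcongr
  exact abs_rpow_sub_rpow_le_abs_sub_rpow hp₀ hp₁ ha hb

theorem convexCombination_sq_rpow_le {l m : ℝ} (hp₀ : 0 ≤ p) (hp₁ : p ≤ 1) (ha : 0 ≤ a)
    (hb : 0 ≤ b) (hl : 0 ≤ l) (hm : 0 ≤ m) (hlm : l + m = 1) :
    l * (a ^ p - b ^ p) ^ 2 + m * (a ^ p + b ^ p) ^ 2 ≤
      (2 ^ (1 - p)) ^ 2 * (l * (a - b) ^ 2 + m * (a + b) ^ 2) ^ p := by
  have one_le_const : (1 : ℝ) ≤ (2 ^ (1 - p)) ^ 2 :=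
    one_le_pow₀ (Real.one_le_rpow one_le_two (sub_nonneg.2 hp₁))
  have sub_le : (a ^ p - b ^ p) ^ 2 ≤ (2 ^ (1 - p)) ^ 2 * ((a - b) ^ 2) ^ p :=
    (sq_rpow_sub_rpow_le hp₀ hp₁ ha hb).trans
      (le_mul_of_one_le_left (by positivity) one_le_const)
  have concave : l * ((a - b) ^ 2) ^ p + m * ((a + b) ^ 2) ^ p ≤
      (l * (a - b) ^ 2 + m * (a + b) ^ 2) ^ p :=
    (Real.concaveOn_rpow hp₀ hp₁).2 (Set.mem_Ici.2 (sq_nonneg _)) (Set.mem_Ici.2 (sq_nonneg _))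
      hl hm hlm
  calc l * (a ^ p - b ^ p) ^ 2 + m * (a ^ p + b ^ p) ^ 2
      ≤ l * ((2 ^ (1 - p)) ^ 2 * ((a - b) ^ 2) ^ p) +
          m * ((2 ^ (1 - p)) ^ 2 * ((a + b) ^ 2) ^ p) := by
        gcongr
        exact sq_rpow_add_rpow_le hp₀ hp₁ ha hb
    _ = (2 ^ (1 - p)) ^ 2 * (l * ((a - b) ^ 2) ^ p + m * ((a + b) ^ 2) ^ p) := by ring
    _ ≤ (2 ^ (1 - p)) ^ 2 * (l * (a - b) ^ 2 + m * (a + b) ^ 2) ^ p := by gcongr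

end Rpow

section InnerProductSpace

variable {E : Type*} [NormedAddCommGroup E] [InnerProductSpace ℝ E]

theorem norm_sub_sq_eq_cos_angle_combination (x y : E) :
    ‖x - y‖ ^ 2 = (1 + Real.cos (angle x y)) / 2 * (‖x‖ - ‖y‖) ^ 2 +
      (1 - Real.cos (angle x y)) / 2 * (‖x‖ + ‖y‖) ^ 2 := by
  rw [norm_sub_sq_real, ← cos_angle_mul_norm_mul_norm]
  ring

theorem angle_norm_rpow_smul_norm_rpow_smul (q : ℝ) (x y : E) :
    angle (‖x‖ ^ q • x) (‖y‖ ^ q • y) = angle x y := by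
  rcases eq_or_ne x 0 with rfl | hx
  · simp only [smul_zero, angle_zero_left]
  rcases eq_or_ne y 0 with rfl | hy
  · simp only [smul_zero, angle_zero_right]
  rw [angle_smul_left_of_pos _ _ (Real.rpow_pos_of_pos (norm_pos_iff.2 hx) q),
    angle_smul_right_of_pos _ _ (Real.rpow_pos_of_pos (norm_pos_iff.2 hy) q)]

theorem norm_norm_rpow_sub_one_smul_self {p : ℝ} (hp : p ≠ 0) (x : E) :
    ‖‖x‖ ^ (p - 1) • x‖ = ‖x‖ ^ p := by
  rw [norm_smul_of_nonneg (by positivity),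
    ← Real.rpow_add_one' (norm_nonneg x) (by rwa [sub_add_cancel]), sub_add_cancel]

theorem norm_norm_rpow_smul_sub_norm_rpow_smul_le {p : ℝ} (hp₀ : 0 < p) (hp₁ : p ≤ 1) (x y : E) :
    ‖‖x‖ ^ (p - 1) • x - ‖y‖ ^ (p - 1) • y‖ ≤ 2 ^ (1 - p) * ‖x - y‖ ^ p := by
  refine (sq_le_sq₀ (norm_nonneg _) (by positivity)).1 ?_
  calc ‖‖x‖ ^ (p - 1) • x - ‖y‖ ^ (p - 1) • y‖ ^ 2
      = (1 + Real.cos (angle x y)) / 2 * (‖x‖ ^ p - ‖y‖ ^ p) ^ 2 +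
          (1 - Real.cos (angle x y)) / 2 * (‖x‖ ^ p + ‖y‖ ^ p) ^ 2 := by
        rw [norm_sub_sq_eq_cos_angle_combination, angle_norm_rpow_smul_norm_rpow_smul,
          norm_norm_rpow_sub_one_smul_self hp₀.ne', norm_norm_rpow_sub_one_smul_self hp₀.ne']
    _ ≤ (2 ^ (1 - p)) ^ 2 * ((1 + Real.cos (angle x y)) / 2 * (‖x‖ - ‖y‖) ^ 2 +
          (1 - Real.cos (angle x y)) / 2 * (‖x‖ + ‖y‖) ^ 2) ^ p :=
        convexCombination_sq_rpow_le hp₀.le hp₁ (norm_nonneg x) (norm_nonneg y)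
          (by linarith [Real.neg_one_le_cos (angle x y)])
          (by linarith [Real.cos_le_one (angle x y)]) (by ring)
    _ = (2 ^ (1 - p) * ‖x - y‖ ^ p) ^ 2 := by
        rw [← norm_sub_sq_eq_cos_angle_combination, ← Real.rpow_pow_comm (norm_nonneg _), mul_pow]

theorem stmt1_general {r : ℝ} (hr₁ : 1 < r) (hr₂ : r ≤ 2) (x y : E) :
    ‖(r * ‖x‖ ^ (r - 2)) • x - (r * ‖y‖ ^ (r - 2)) • y‖ ≤
      r * 2 ^ (2 - r) * ‖x - y‖ ^ (r - 1) := by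
  have hr₀ : 0 ≤ r := zero_le_one.trans hr₁.le
  have holder := norm_norm_rpow_smul_sub_norm_rpow_smul_le (sub_pos.2 hr₁) (by linarith) x y
  rw [show r - 1 - 1 = r - 2 by ring, show 1 - (r - 1) = 2 - r by ring] at holder
  rw [mul_smul, mul_smul, ← smul_sub, norm_smul_of_nonneg hr₀, mul_assoc]
  gcongr

end InnerProductSpace

theorem abs_mul_real_sign (x : ℝ) : |x| * Real.sign x = x := by
  rcases lt_trichotomy x 0 with hx | rfl | hx
  · rw [Real.sign_of_neg hx, abs_of_neg hx, neg_mul_neg, mul_one]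
  · rw [Real.sign_zero, mul_zero]
  · rw [Real.sign_of_pos hx, abs_of_pos hx, mul_one]

theorem abs_rpow_mul_real_sign (s x : ℝ) : |x| ^ s * Real.sign x = |x| ^ (s - 1) * x := by
  rcases eq_or_ne x 0 with rfl | hx
  · rw [Real.sign_zero, mul_zero, mul_zero]
  calc |x| ^ s * Real.sign x = |x| ^ (s - 1) * (|x| * Real.sign x) := by
        rw [← mul_assoc, ← Real.rpow_add_one (abs_ne_zero.2 hx), sub_add_cancel]
    _ = |x| ^ (s - 1) * x := by rw [abs_mul_real_sign]

/-- for `r ∈ (1,2]` and `ψ_r(x) = |x|^r`, with derivative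
`ψ_r'(x) = r |x|^(r-1) sign x`, one has `|ψ_r'(x) - ψ_r'(y)| ≤ r 2^(2-r) |x-y|^(r-1)`. -/
theorem stmt1 (r : ℝ) (hr1 : 1 < r) (hr2 : r ≤ 2) (x y : ℝ) :
    |r * |x| ^ (r - 1) * Real.sign x - r * |y| ^ (r - 1) * Real.sign y| ≤
      r * 2 ^ (2 - r) * |x - y| ^ (r - 1) := by
  simpa only [Real.norm_eq_abs, smul_eq_mul, mul_assoc, abs_rpow_mul_real_sign, sub_sub,
    one_add_one_eq_two] using stmt1_general hr1 hr2 x y
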